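/- arXiv:0804.0991 — 3 statements merged into one kernel-verified Lean document; each statement's English description precedes it below -/
import Mathlib

section
/- (Mehler's formula) For every w with 0 < w < 1 and all x, y ∈ ℝ, Σ_{n=0}^∞ [w^n (1 − w²)^{1/2} / (2^n n!)] H_n(x) H_n(y) = (1 − w²)^{1/2} · (1 − w²)^{−1/2} exp((2xyw − (x² + y²)w²)/(1 − w²)); that is, Σ_{n=0}^∞ [w^n (1 − w²)^{1/2} / (2^n n!)] H_n(x) H_n(y) = exp((2xyw − (x² + y²)w²)/(1 − w²)), the series converging absolutely. -/
open Real

/-- The physicists' Hermite polynomial `H_n(x) = (−1)^n e^{x²} (dⁿ/dxⁿ) e^{−x²}`. -/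
noncomputable def hermiteH (n : ℕ) (x : ℝ) : ℝ :=
  (-1) ^ n * Real.exp (x ^ 2) * iteratedDeriv n (fun t => Real.exp (-t ^ 2)) x

open MeasureTheory Complex in
lemma mehler_aux_integrable (x : ℝ) (n : ℕ) :
    Integrable (fun z : ℝ => ((x : ℂ) + I * z) ^ n * cexp (-(z : ℂ) ^ 2)) := by
  have h0 : Integrable (fun z : ℝ => n.factorial * Real.exp (|x| + 1 / 2) *
      Real.exp (-(1 / 2) * z ^ 2)) :=
    (integrable_exp_neg_mul_sq (by norm_num)).const_mul _
  refine h0.mono' (by fun_prop) (Filter.Eventually.of_forall fun z => ?_)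
  have h1 : ‖cexp (-(z : ℂ) ^ 2)‖ = Real.exp (-z ^ 2) := by
    rw [← Complex.norm_exp_ofReal]; push_cast; rfl
  have h2 : ‖(x : ℂ) + I * z‖ ≤ |x| + |z| := by
    refine (norm_add_le _ _).trans ?_
    simp
  have h3 : ‖(x : ℂ) + I * z‖ ^ n ≤ n.factorial * Real.exp (|x| + |z|) := by
    have := Real.pow_div_factorial_le_exp (|x| + |z|) (by positivity) n
    rw [div_le_iff₀ (by positivity)] at this
    calc _ ≤ (|x| + |z|) ^ n := by gcongr
      _ ≤ _ := by linarith
  rw [norm_mul, norm_pow, h1]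
  calc _ ≤ n.factorial * Real.exp (|x| + |z|) * Real.exp (-z ^ 2) := by gcongr
    _ = n.factorial * Real.exp (|x| + |z| + -z ^ 2) := by rw [mul_assoc, ← Real.exp_add]
    _ ≤ n.factorial * Real.exp (|x| + 1 / 2 + -(1 / 2) * z ^ 2) := by
      refine mul_le_mul_of_nonneg_left (Real.exp_le_exp.mpr ?_) (by positivity)
      nlinarith [sq_nonneg (|z| - 1), sq_abs z]
    _ = _ := by rw [Real.exp_add]; ring

open MeasureTheory Complex in
/-- Gaussian moments. -/
noncomputable def mehlerF (n : ℕ) (x : ℝ) : ℂ :=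
  ∫ z : ℝ, ((x : ℂ) + I * z) ^ n * cexp (-(z : ℂ) ^ 2)

open MeasureTheory Complex in
lemma mehlerF_rec (n : ℕ) (x : ℝ) :
    mehlerF (n + 2) x = x * mehlerF (n + 1) x - (n + 1) / 2 * mehlerF n x := by
  have hd : ∀ z : ℝ, HasDerivAt (fun z : ℝ => ((x : ℂ) + I * z) ^ (n + 1) * cexp (-(z : ℂ) ^ 2))
      (I * (n + 1) * (((x : ℂ) + I * z) ^ n * cexp (-(z : ℂ) ^ 2)) +
        2 * I * ((((x : ℂ) + I * z) ^ (n + 2) * cexp (-(z : ℂ) ^ 2)) -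
          x * (((x : ℂ) + I * z) ^ (n + 1) * cexp (-(z : ℂ) ^ 2)))) z := by
    intro z
    have h1 : HasDerivAt (fun z : ℝ => (z : ℂ)) 1 z := Complex.ofRealCLM.hasDerivAt
    have h2 := (((h1.const_mul I).const_add (x : ℂ)).fun_pow (n + 1)).mul ((h1.fun_pow 2).neg.cexp)
    refine h2.congr_deriv ?_
    simp only [Nat.add_sub_cancel]
    push_cast
    linear_combination (-2 * z * ((x : ℂ) + I * z) ^ (n + 1) * cexp (-(z : ℂ) ^ 2)) * Complex.I_sq
  have i0 := mehler_aux_integrable x n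
  have i1 := mehler_aux_integrable x (n + 1)
  have i2 := mehler_aux_integrable x (n + 2)
  have := integral_eq_zero_of_hasDerivAt_of_integrable hd
    ((i0.const_mul _).add ((i2.sub (i1.const_mul _)).const_mul _)) i1
  have i3 : Integrable (fun z : ℝ => 2 * I * ((((x : ℂ) + I * z) ^ (n + 2) * cexp (-(z : ℂ) ^ 2)) -
          x * (((x : ℂ) + I * z) ^ (n + 1) * cexp (-(z : ℂ) ^ 2)))) :=
    (i2.sub (i1.const_mul _)).const_mul _
  rw [integral_add (i0.const_mul _) i3,
    integral_const_mul, integral_const_mul, integral_sub i2 (i1.const_mul _),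
    integral_const_mul] at this
  unfold mehlerF
  linear_combination (-I / 2) * this +
    (-(n + 1) / 2 * (∫ z : ℝ, ((x : ℂ) + I * z) ^ n * cexp (-(z : ℂ) ^ 2)) -
     ((∫ z : ℝ, ((x : ℂ) + I * z) ^ (n + 2) * cexp (-(z : ℂ) ^ 2)) -
      x * (∫ z : ℝ, ((x : ℂ) + I * z) ^ (n + 1) * cexp (-(z : ℂ) ^ 2)))) * -Complex.I_sq

lemma mehler_iter_rec (n : ℕ) : ∀ x : ℝ,
    iteratedDeriv (n + 2) (fun t => Real.exp (-t ^ 2)) x =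
      -2 * x * iteratedDeriv (n + 1) (fun t => Real.exp (-t ^ 2)) x -
        2 * (n + 1) * iteratedDeriv n (fun t => Real.exp (-t ^ 2)) x := by
  have hD : ∀ (m : ℕ) (x : ℝ), HasDerivAt (iteratedDeriv m (fun t => Real.exp (-t ^ 2)))
      (iteratedDeriv (m + 1) (fun t => Real.exp (-t ^ 2)) x) x := by
    intro m x
    rw [iteratedDeriv_succ]
    have hc : ContDiff ℝ (m + 1) (fun t : ℝ => Real.exp (-t ^ 2)) := by fun_prop
    exact ((hc.differentiable_iteratedDeriv m (by exact_mod_cast Nat.lt_succ_self m)) x).hasDerivAt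
  have h1 : ∀ x : ℝ, iteratedDeriv 1 (fun t => Real.exp (-t ^ 2)) x =
      -2 * x * iteratedDeriv 0 (fun t => Real.exp (-t ^ 2)) x := by
    intro x
    rw [iteratedDeriv_one, iteratedDeriv_zero]
    refine HasDerivAt.deriv ?_
    refine (((hasDerivAt_id x).fun_pow 2).neg.exp).congr_deriv ?_
    simp; ring
  induction n with
  | zero =>
    intro x
    refine (hD 1 x).unique ?_
    rw [show iteratedDeriv 1 (fun t => Real.exp (-t ^ 2)) =
      fun x => -2 * x * iteratedDeriv 0 (fun t => Real.exp (-t ^ 2)) x from funext h1]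
    refine (((hasDerivAt_id x).const_mul (-2)).mul (hD 0 x)).congr_deriv ?_
    simp [h1 x]; ring
  | succ n ih =>
    intro x
    have hx := ih x
    refine (hD (n + 2) x).unique ?_
    rw [show iteratedDeriv (n + 2) (fun t => Real.exp (-t ^ 2)) = _ from funext ih]
    refine ((((hasDerivAt_id x).const_mul (-2)).mul (hD (n + 1) x)).sub
      ((hD n x).const_mul (2 * ((n : ℝ) + 1)))).congr_deriv ?_
    simp only [id]
    push_cast
    linear_combination -2 * x * hx

open MeasureTheory Complex in
lemma mehler_zero (x : ℝ) : mehlerF 0 x = (√π : ℝ) := by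
  have := integral_gaussian 1
  simp only [neg_mul, one_mul, div_one] at this
  rw [← this, ← integral_complex_ofReal]
  simp [mehlerF]

open MeasureTheory Complex in
lemma mehler_one (x : ℝ) : mehlerF 1 x = x * (√π : ℝ) := by
  have hd : ∀ z : ℝ, HasDerivAt (fun z : ℝ => ((x : ℂ) + I * z) ^ 0 * cexp (-(z : ℂ) ^ 2))
        (2 * I * ((((x : ℂ) + I * z) ^ 1 * cexp (-(z : ℂ) ^ 2)) -
          x * (((x : ℂ) + I * z) ^ 0 * cexp (-(z : ℂ) ^ 2)))) z := by
    intro z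
    have h1 : HasDerivAt (fun z : ℝ => (z : ℂ)) 1 z := Complex.ofRealCLM.hasDerivAt
    have h2 := ((h1.fun_pow 2).neg.cexp)
    simp only [pow_zero, one_mul]
    refine h2.congr_deriv ?_
    push_cast
    linear_combination (-2 * z * cexp (-(z : ℂ) ^ 2)) * Complex.I_sq
  have i0 := mehler_aux_integrable x 0
  have i1 := mehler_aux_integrable x 1
  have := integral_eq_zero_of_hasDerivAt_of_integrable hd
    (((i1.sub (i0.const_mul _)).const_mul _)) i0
  rw [integral_const_mul, integral_sub i1 (i0.const_mul _), integral_const_mul] at this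
  rw [← mehler_zero x]
  have h := (mul_eq_zero.mp this).resolve_left (by simp)
  exact sub_eq_zero.mp h

lemma hermiteH_eq (x : ℝ) (n : ℕ) :
    (√π : ℝ) * (hermiteH n x : ℂ) = 2 ^ n * mehlerF n x := by
  have hE : Real.exp (x ^ 2) * Real.exp (-x ^ 2) = 1 := by
    rw [← Real.exp_add]; simp
  induction n using Nat.twoStepInduction with
  | zero => 
    have : hermiteH 0 x = 1 := by simp [hermiteH, hE]
    rw [mehler_zero, this]; simp
  | one =>
    have : hermiteH 1 x = 2 * x := by
      have h : deriv (fun t => Real.exp (-t ^ 2)) x = -2 * x * Real.exp (-x ^ 2) := by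
        refine HasDerivAt.deriv ?_
        refine (((hasDerivAt_id x).fun_pow 2).neg.exp).congr_deriv ?_
        simp; ring
      rw [hermiteH, iteratedDeriv_one, h]
      linear_combination 2 * x * hE
    rw [mehler_one, this]; push_cast; ring
  | more n h0 h1 =>
    have h : hermiteH (n + 2) x = 2 * x * hermiteH (n + 1) x - 2 * (n + 1) * hermiteH n x := by
      rw [hermiteH, mehler_iter_rec, hermiteH, hermiteH]; ring
    rw [h, mehlerF_rec]
    push_cast
    linear_combination 2 * (x : ℂ) * h1 - 2 * ((n : ℂ) + 1) * h0

open MeasureTheory Complex in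
lemma mehler_gauss (w : ℝ) (hw0 : 0 < w) (hw1 : w < 1) (x y : ℝ)
    (hi : Integrable (fun p : ℝ × ℝ => cexp (2 * w * (x + I * p.1) * (y + I * p.2)) *
      (cexp (-(p.1 : ℂ) ^ 2) * cexp (-(p.2 : ℂ) ^ 2)))) :
    ∫ p : ℝ × ℝ, cexp (2 * w * (x + I * p.1) * (y + I * p.2)) *
      (cexp (-(p.1 : ℂ) ^ 2) * cexp (-(p.2 : ℂ) ^ 2)) =
    (π / √(1 - w ^ 2) *
      Real.exp ((2 * x * y * w - (x ^ 2 + y ^ 2) * w ^ 2) / (1 - w ^ 2)) : ℝ) := by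
  have hw : 0 < 1 - w ^ 2 := by nlinarith
  have hs : ∀ r : ℝ, 0 ≤ r → (r : ℂ) ^ (1 / 2 : ℂ) = (√r : ℝ) := by
    intro r hr
    rw [Real.sqrt_eq_rpow, Complex.ofReal_cpow hr]; norm_num
  rw [Measure.volume_eq_prod, integral_prod _ hi]
  have hin : ∀ z : ℝ, ∫ v : ℝ, cexp (2 * w * (x + I * z) * (y + I * v)) *
      (cexp (-(z : ℂ) ^ 2) * cexp (-(v : ℂ) ^ 2)) =
      (√π : ℝ) * cexp (((w : ℂ) ^ 2 - 1) * z ^ 2 + 2 * w * I * (y - w * x) * z +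
        (2 * w * x * y - w ^ 2 * x ^ 2)) := by
    intro z
    have h := integral_cexp_quadratic (b := -1) (by simp) (2 * w * I * (x + I * z))
      (2 * w * (x + I * z) * y - z ^ 2)
    rw [neg_neg, div_one, hs π Real.pi_pos.le] at h
    convert h using 3
    · rw [← Complex.exp_add, ← Complex.exp_add]; congr 1; ring
    · ring_nf
      simp only [Complex.I_sq, show I ^ 4 = 1 by simp, show I ^ 3 = -I by simp]
      ring
  simp only [hin]
  rw [integral_const_mul]
  have hb : (((w : ℂ) ^ 2 - 1)).re < 0 := by
    rw [show ((w : ℂ) ^ 2 - 1) = ((w ^ 2 - 1 : ℝ) : ℂ) by push_cast; rfl, Complex.ofReal_re]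
    linarith
  rw [integral_cexp_quadratic hb]
  have hne : (1 - (w : ℂ) ^ 2) ≠ 0 := by exact_mod_cast hw.ne'
  have hne' : ((w : ℂ) ^ 2 - 1) ≠ 0 := by
    intro h; apply hne; linear_combination -h
  rw [show (π : ℂ) / -((w : ℂ) ^ 2 - 1) = ((π / (1 - w ^ 2) : ℝ) : ℂ) by push_cast; congr 1; ring,
    hs _ (by positivity)]
  have he : 2 * (w : ℂ) * x * y - w ^ 2 * x ^ 2 - (2 * w * I * (y - w * x)) ^ 2 /
      (4 * ((w : ℂ) ^ 2 - 1)) =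
      (((2 * x * y * w - (x ^ 2 + y ^ 2) * w ^ 2) / (1 - w ^ 2) : ℝ) : ℂ) := by
    push_cast
    rw [show (2 * (w : ℂ) * I * (y - w * x)) ^ 2 = -(2 * w * (y - w * x)) ^ 2 by
      linear_combination (2 * (w : ℂ) * (y - w * x)) ^ 2 * Complex.I_sq,
      show (4 * ((w : ℂ) ^ 2 - 1)) = -(4 * (1 - (w : ℂ) ^ 2)) by ring, neg_div_neg_eq]
    field_simp
    ring
  rw [he, ← Complex.ofReal_exp, ← mul_assoc, ← Complex.ofReal_mul, ← Complex.ofReal_mul,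
    Real.sqrt_div Real.pi_pos.le, ← mul_div_assoc, Real.mul_self_sqrt Real.pi_pos.le]

open MeasureTheory Complex in
lemma mehler_hasSum (w : ℝ) (hw0 : 0 < w) (hw1 : w < 1) (x y : ℝ) :
    HasSum (fun n : ℕ => ((w ^ n / (2 ^ n * n.factorial) * (hermiteH n x * hermiteH n y) : ℝ) : ℂ))
      ((1 / √(1 - w ^ 2) *
      Real.exp ((2 * x * y * w - (x ^ 2 + y ^ 2) * w ^ 2) / (1 - w ^ 2)) : ℝ) : ℂ) := by
  set T : ℝ × ℝ → ℂ := fun p => 2 * w * (x + I * p.1) * (y + I * p.2) with hT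
  set G : ℝ × ℝ → ℂ := fun p => cexp (-(p.1 : ℂ) ^ 2) * cexp (-(p.2 : ℂ) ^ 2) with hG
  have hnG : ∀ p, ‖G p‖ = Real.exp (-p.1 ^ 2) * Real.exp (-p.2 ^ 2) := by
    intro p
    rw [hG, norm_mul, ← Complex.norm_exp_ofReal, ← Complex.norm_exp_ofReal]; push_cast; rfl
  have hns : ∀ a b : ℝ, ‖(a : ℂ) + I * b‖ ^ 2 = a ^ 2 + b ^ 2 := by
    intro a b
    rw [mul_comm, ← Complex.normSq_eq_norm_sq, Complex.normSq_add_mul_I]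
  have hnT : ∀ p, ‖T p‖ ≤ w * (x ^ 2 + y ^ 2) + w * (p.1 ^ 2 + p.2 ^ 2) := by
    intro p
    have : ‖T p‖ = w * (2 * ‖(x : ℂ) + I * p.1‖ * ‖(y : ℂ) + I * p.2‖) := by
      simp only [hT, norm_mul, Complex.norm_real, Complex.norm_ofNat, Real.norm_eq_abs,
        abs_of_pos hw0]; ring
    rw [this, ← mul_add]
    gcongr
    nlinarith [hns x p.1, hns y p.2, sq_nonneg (‖(x : ℂ) + I * p.1‖ - ‖(y : ℂ) + I * p.2‖)]
  have hTc : Continuous T := by fun_prop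
  have hGc : Continuous G := by fun_prop
  have hint : Integrable (fun p => Real.exp ‖T p‖ * ‖G p‖) := by
    have hg : Integrable (fun z : ℝ => Real.exp (-(1 - w) * z ^ 2)) :=
      integrable_exp_neg_mul_sq (by linarith)
    have h0 := (hg.mul_prod hg).const_mul (Real.exp (w * (x ^ 2 + y ^ 2)))
    refine h0.mono' (by fun_prop) (Filter.Eventually.of_forall fun p => ?_)
    rw [Real.norm_of_nonneg (by positivity), hnG]
    calc _ ≤ Real.exp (w * (x ^ 2 + y ^ 2) + w * (p.1 ^ 2 + p.2 ^ 2)) *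
          (Real.exp (-p.1 ^ 2) * Real.exp (-p.2 ^ 2)) := by
          gcongr; exact hnT p
      _ = _ := by
        simp only [← Real.exp_add]; congr 1; ring
  have hsumN : ∀ p, HasSum (fun n : ℕ => ‖T p‖ ^ n / n.factorial * ‖G p‖)
      (Real.exp ‖T p‖ * ‖G p‖) := by
    intro p
    refine HasSum.mul_right _ ?_
    rw [Real.exp_eq_exp_ℝ]
    exact NormedSpace.expSeries_div_hasSum_exp ‖T p‖
  have hmain := hasSum_integral_of_dominated_convergence (μ := (volume : Measure (ℝ × ℝ)))
    (F := fun (n : ℕ) p => T p ^ n / n.factorial * G p) (f := fun p => cexp (T p) * G p)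
    (fun (n : ℕ) p => ‖T p‖ ^ n / n.factorial * ‖G p‖)
    (fun n => by
      apply Continuous.aestronglyMeasurable
      fun_prop)
    (fun n => Filter.Eventually.of_forall fun p => by simp)
    (Filter.Eventually.of_forall fun p => (hsumN p).summable)
    (by simpa only [(hsumN _).tsum_eq] using hint)
    (Filter.Eventually.of_forall fun p => by
      refine HasSum.mul_right _ ?_
      rw [Complex.exp_eq_exp_ℂ]
      exact NormedSpace.expSeries_div_hasSum_exp (T p))
  have hi : Integrable (fun p => cexp (T p) * G p) := by
    refine hint.mono' (by fun_prop) (Filter.Eventually.of_forall fun p => ?_)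
    rw [norm_mul]
    gcongr
    exact Complex.norm_exp_le_exp_norm _
  have hgs := mehler_gauss w hw0 hw1 x y hi
  have hpi : (π : ℂ) ≠ 0 := by exact_mod_cast Real.pi_ne_zero
  have hfin := hmain.mul_left (1 / (π : ℂ))
  have hval : (1 / (π : ℂ)) * ∫ p, cexp (T p) * G p = ((1 / √(1 - w ^ 2) *
      Real.exp ((2 * x * y * w - (x ^ 2 + y ^ 2) * w ^ 2) / (1 - w ^ 2)) : ℝ) : ℂ) := by
    simp only [hT, hG]
    rw [hgs, Complex.ofReal_mul, Complex.ofReal_div, Complex.ofReal_mul, Complex.ofReal_div]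
    field_simp
    simp
  rw [hval] at hfin
  refine hfin.congr_fun ?_
  intro n
  have hterm : ∫ p : ℝ × ℝ, T p ^ n / n.factorial * G p =
      (2 * w) ^ n / n.factorial * (mehlerF n x * mehlerF n y) := by
    rw [mehlerF, mehlerF, Measure.volume_eq_prod, ← integral_prod_mul, ← integral_const_mul]
    congr 1
    ext p
    simp only [hT, hG, mul_pow]
    ring
  rw [hterm]
  have hp : ((√π : ℝ) : ℂ) * ((√π : ℝ) : ℂ) = π := by
    rw [← Complex.ofReal_mul, Real.mul_self_sqrt Real.pi_pos.le]
  have hx := hermiteH_eq x n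
  have hy := hermiteH_eq y n
  have hxy : (π : ℂ) * (hermiteH n x * hermiteH n y) =
      2 ^ n * 2 ^ n * (mehlerF n x * mehlerF n y) := by
    rw [← hp]
    linear_combination ((√π : ℝ) : ℂ) * (hermiteH n y : ℂ) * hx + 2 ^ n * mehlerF n x * hy
  have hf : (n.factorial : ℂ) ≠ 0 := by exact_mod_cast n.factorial_ne_zero
  push_cast
  rw [mul_pow]
  field_simp
  linear_combination (w : ℂ) ^ n * hxy

/-- Mehler's formula: for `0 < w < 1` and all real `x, y`,
`Σ_{n≥0} [wⁿ (1−w²)^{1/2} / (2ⁿ n!)] H_n(x) H_n(y)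
  = exp((2xyw − (x²+y²)w²)/(1−w²))`, the series converging absolutely. -/
theorem mehler_formula (w : ℝ) (hw0 : 0 < w) (hw1 : w < 1) (x y : ℝ) :
    (Summable fun n : ℕ =>
        |w ^ n * Real.sqrt (1 - w ^ 2) / (2 ^ n * n.factorial) *
          (hermiteH n x * hermiteH n y)|) ∧
    (∑' n : ℕ,
        w ^ n * Real.sqrt (1 - w ^ 2) / (2 ^ n * n.factorial) *
          (hermiteH n x * hermiteH n y))
      = Real.exp ((2 * x * y * w - (x ^ 2 + y ^ 2) * w ^ 2) / (1 - w ^ 2)) := by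
  have hw : 0 < 1 - w ^ 2 := by nlinarith
  have h := (Complex.hasSum_ofReal.mp (mehler_hasSum w hw0 hw1 x y)).mul_left √(1 - w ^ 2)
  have hsq : √(1 - w ^ 2) ≠ 0 := (Real.sqrt_pos.mpr hw).ne'
  rw [← mul_assoc, mul_one_div_cancel hsq, one_mul] at h
  have hfinal : HasSum (fun n : ℕ => w ^ n * Real.sqrt (1 - w ^ 2) / (2 ^ n * n.factorial) *
          (hermiteH n x * hermiteH n y))
      (Real.exp ((2 * x * y * w - (x ^ 2 + y ^ 2) * w ^ 2) / (1 - w ^ 2))) := by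
    refine h.congr_fun fun n => ?_
    ring
  exact ⟨hfinal.summable.abs, hfinal.tsum_eq⟩
end

section
/- For any h > 0, any w with 0 < w < 1, let a = a(w) = √((1 − w²)/(2h²w)) and b = b(w) = √((1 − w)/h²), and define the scaled damped Hermite functions H_n(x; a, b) = H_n(ax) e^{−b²x²/2}. Then for all x, y ∈ ℝ, K_{h²}(x,y) = (1/(√(2π) h)) Σ_{n=0}^∞ [w^n (1 − w²)^{1/2} / (2^n n!)] H_n(x; a, b) · H_n(y; a, b), the series converging absolutely. -/
open Real

/-- The scaled, damped Hermite function `H_n(x; a, b) = H_n(ax) e^{−b²x²/2}`. -/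
noncomputable def hermiteScaled (n : ℕ) (a b x : ℝ) : ℝ :=
  hermiteH n (a * x) * Real.exp (-b ^ 2 * x ^ 2 / 2)

open MeasureTheory FourierTransform

lemma hasSum_of_eq {E : Type*} [NormedAddCommGroup E] {f g : ℕ → E} {s : E}
    (hg : HasSum g s) (h : ∀ n, f n = g n) : HasSum f s := by
  rwa [funext h]

lemma cpow_half_ofReal (r : ℝ) (hr : 0 ≤ r) : (r : ℂ) ^ (1 / 2 : ℂ) = ((√r : ℝ) : ℂ) := by
  rw [Real.sqrt_eq_rpow, Complex.ofReal_cpow hr]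
  norm_num

lemma iteratedDeriv_ofReal_comp (f : ℝ → ℝ) (hf : ContDiff ℝ ⊤ f) (n : ℕ) (x : ℝ) :
    iteratedDeriv n (fun t => ((f t : ℝ) : ℂ)) x = ((iteratedDeriv n f x : ℝ) : ℂ) := by
  have h := Complex.ofRealCLM.iteratedFDeriv_comp_left (hf.contDiffAt (x := x)) (i := n) le_top
  rw [iteratedDeriv, iteratedDeriv]
  change iteratedFDeriv ℝ n (Complex.ofRealCLM ∘ f) x _ = _
  rw [h]
  rfl

lemma moment_integrable (n : ℕ) :
    Integrable (fun t : ℝ => t ^ n • Complex.exp (-π * π * t ^ 2)) := by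
  have h := integrable_rpow_mul_exp_neg_mul_sq (b := π * π) (by positivity)
    (s := n) (by have : (0:ℝ) ≤ n := Nat.cast_nonneg n
                 linarith)
  have h2 := h.ofReal (𝕜 := ℂ)
  refine h2.congr (Filter.Eventually.of_forall fun t => ?_)
  simp [Complex.real_smul]

lemma hermite_integral (n : ℕ) (x : ℝ) :
    ((hermiteH n x : ℝ) : ℂ) = Complex.exp (x ^ 2) * (√π : ℝ) *
      ∫ t : ℝ, (2 * π * Complex.I * t) ^ n *
        Complex.exp (-π ^ 2 * t ^ 2 - 2 * π * Complex.I * t * x) := by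
  have hg := fourier_gaussian_pi (b := (π : ℂ)) (by simpa using Real.pi_pos)
  have hpi : (π : ℂ) ≠ 0 := by exact_mod_cast Real.pi_ne_zero
  have hsq : ((√π : ℝ) : ℂ) ≠ 0 := by
    exact_mod_cast (Real.sqrt_pos.mpr Real.pi_pos).ne'
  have hd := congrFun (Real.iteratedDeriv_fourier (N := ⊤) (n := n)
    (fun m _ => moment_integrable m) le_top) x
  rw [hg, cpow_half_ofReal _ Real.pi_pos.le, iteratedDeriv_const_mul_field,
    Real.fourier_real_eq_integral_exp_smul] at hd
  have he : (fun t : ℝ => Complex.exp (-π / π * t ^ 2))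
      = fun t : ℝ => ((Real.exp (-t ^ 2) : ℝ) : ℂ) := by
    funext t
    rw [neg_div, div_self hpi]
    push_cast
    congr 1
    ring
  rw [he, iteratedDeriv_ofReal_comp _ (by fun_prop)] at hd
  have hd2 : ((iteratedDeriv n (fun t => Real.exp (-t ^ 2)) x : ℝ) : ℂ)
      = (√π : ℝ) * ∫ v : ℝ, Complex.exp (↑(-2 * π * v * x) * Complex.I) •
        (-2 * π * Complex.I * v) ^ n • Complex.exp (-π * π * v ^ 2) := by
    rw [← hd]
    field_simp
  unfold hermiteH
  push_cast
  rw [hd2]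
  have : ∀ A B C D : ℂ, A * B * (C * D) = B * C * (A * D) := by intros; ring
  rw [this, ← integral_const_mul]
  congr 2
  funext t
  simp only [smul_eq_mul]
  have hc : ∀ A B C D : ℂ, A * (B * (C * D)) = (A * C) * (B * D) := by intros; ring
  rw [hc, ← Complex.exp_add, ← mul_pow]
  congr 2
  · ring
  · push_cast; ring

/-- the double-integral integrand -/
noncomputable def mehlerTerm (w x y : ℝ) (n : ℕ) (p : ℝ × ℝ) : ℂ :=
  (w / 2) ^ n / n.factorial *
   (((2 * π * Complex.I * p.1) ^ n *
        Complex.exp (-π ^ 2 * p.1 ^ 2 - 2 * π * Complex.I * p.1 * x)) *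
    ((2 * π * Complex.I * p.2) ^ n *
        Complex.exp (-π ^ 2 * p.2 ^ 2 - 2 * π * Complex.I * p.2 * y)))

lemma norm_gauss (t x : ℝ) :
    ‖Complex.exp (-π ^ 2 * t ^ 2 - 2 * π * Complex.I * t * x)‖ = Real.exp (-π ^ 2 * t ^ 2) := by
  rw [Complex.norm_exp]
  congr 1
  have : (-π ^ 2 * t ^ 2 - 2 * π * Complex.I * t * x : ℂ)
    = ((-π ^ 2 * t ^ 2 : ℝ) : ℂ) + ((-(2 * π * t * x) : ℝ) : ℂ) * Complex.I := by
    push_cast; ring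
  rw [this, Complex.add_re, Complex.re_ofReal_mul, Complex.I_re, Complex.ofReal_re]
  ring

lemma norm_mehlerTerm (w x y : ℝ) (hw : 0 < w) (n : ℕ) (p : ℝ × ℝ) :
    ‖mehlerTerm w x y n p‖ = (2 * w * π ^ 2 * |p.1 * p.2|) ^ n / n.factorial *
      Real.exp (-π ^ 2 * p.1 ^ 2 + -π ^ 2 * p.2 ^ 2) := by
  unfold mehlerTerm
  simp only [norm_mul, norm_gauss, norm_div, norm_pow]
  rw [Real.exp_add]
  simp only [Complex.norm_real, Complex.norm_I, Complex.norm_natCast, Real.norm_eq_abs,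
    abs_of_pos Real.pi_pos, abs_of_pos hw, Complex.norm_ofNat, abs_mul]
  have : (2 * w * π ^ 2 * (|p.1| * |p.2|)) ^ n
    = (w / 2) ^ n * (2 * π * 1 * |p.1|) ^ n * (2 * π * 1 * |p.2|) ^ n := by
    rw [← mul_pow, ← mul_pow]; congr 1; ring
  rw [this]; ring

lemma hasSum_exp_real (z : ℝ) : HasSum (fun n : ℕ => z ^ n / n.factorial) (Real.exp z) := by
  rw [Real.exp_eq_exp_ℝ]; exact NormedSpace.expSeries_div_hasSum_exp z

lemma hasSum_exp_complex (z : ℂ) :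
    HasSum (fun n : ℕ => z ^ n / n.factorial) (Complex.exp z) := by
  rw [Complex.exp_eq_exp_ℂ]; exact NormedSpace.expSeries_div_hasSum_exp z

noncomputable def mehlerLim (w x y : ℝ) (p : ℝ × ℝ) : ℂ :=
  Complex.exp (-(2 * w * π ^ 2 * (p.1 * p.2))) *
    (Complex.exp (-π ^ 2 * p.1 ^ 2 - 2 * π * Complex.I * p.1 * x) *
     Complex.exp (-π ^ 2 * p.2 ^ 2 - 2 * π * Complex.I * p.2 * y))

lemma mehler_hasSum_pt (w x y : ℝ) (p : ℝ × ℝ) :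
    HasSum (fun n => mehlerTerm w x y n p) (mehlerLim w x y p) := by
  have h := (hasSum_exp_complex (-(2 * w * π ^ 2 * (p.1 * p.2)))).mul_right
    (Complex.exp (-π ^ 2 * p.1 ^ 2 - 2 * π * Complex.I * p.1 * x) *
     Complex.exp (-π ^ 2 * p.2 ^ 2 - 2 * π * Complex.I * p.2 * y))
  refine hasSum_of_eq h fun n => ?_
  unfold mehlerTerm
  have e : (-(2 * w * π ^ 2 * (p.1 * p.2)) : ℂ) ^ n
      = (w / 2) ^ n * (2 * π * Complex.I * p.1) ^ n * (2 * π * Complex.I * p.2) ^ n := by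
    rw [← mul_pow, ← mul_pow]
    congr 1
    linear_combination (-(2 * w * π ^ 2 * (p.1 * p.2)) : ℂ) * Complex.I_sq
  rw [e]
  ring

lemma gauss2_integrable (c : ℝ) (hc : 0 < c) :
    Integrable (fun p : ℝ × ℝ => Real.exp (-c * p.1 ^ 2) * Real.exp (-c * p.2 ^ 2)) :=
  (integrable_exp_neg_mul_sq hc).mul_prod (integrable_exp_neg_mul_sq hc)

lemma dom_integrable (w : ℝ) (hw : 0 < w) (hw1 : w < 1) :
    Integrable (fun p : ℝ × ℝ => Real.exp (2 * w * π ^ 2 * |p.1 * p.2|) *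
      Real.exp (-π ^ 2 * p.1 ^ 2 + -π ^ 2 * p.2 ^ 2)) := by
  have hc : 0 < (1 - w) * π ^ 2 := mul_pos (by linarith) (by positivity)
  refine (gauss2_integrable _ hc).mono' (by fun_prop) (Filter.Eventually.of_forall fun p => ?_)
  rw [Real.norm_of_nonneg (by positivity), ← Real.exp_add, ← Real.exp_add, Real.exp_le_exp]
  have h1 : 2 * |p.1 * p.2| ≤ p.1 ^ 2 + p.2 ^ 2 := by
    rw [abs_mul, ← sq_abs p.1, ← sq_abs p.2]
    nlinarith [sq_nonneg (|p.1| - |p.2|)]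
  have h2 : 0 < w * π ^ 2 := by positivity
  nlinarith [mul_le_mul_of_nonneg_left h1 h2.le]

lemma mehler_hasSum_int (w x y : ℝ) (hw : 0 < w) (hw1 : w < 1) :
    HasSum (fun n => ∫ p, mehlerTerm w x y n p) (∫ p, mehlerLim w x y p) := by
  have hs : ∀ p : ℝ × ℝ, HasSum (fun n => ‖mehlerTerm w x y n p‖)
      (Real.exp (2 * w * π ^ 2 * |p.1 * p.2|) *
      Real.exp (-π ^ 2 * p.1 ^ 2 + -π ^ 2 * p.2 ^ 2)) := by
    intro p
    simp only [norm_mehlerTerm w x y hw]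
    exact (hasSum_exp_real _).mul_right _
  refine hasSum_integral_of_dominated_convergence (fun n p => ‖mehlerTerm w x y n p‖)
    (fun n => ?_) (fun n => Filter.Eventually.of_forall fun p => le_rfl)
    (Filter.Eventually.of_forall fun p => (hs p).summable) ?_
    (Filter.Eventually.of_forall fun p => mehler_hasSum_pt w x y p)
  · apply Continuous.aestronglyMeasurable
    unfold mehlerTerm
    fun_prop
  · simp only [fun p => (hs p).tsum_eq]
    exact dom_integrable w hw hw1

lemma mehlerLim_integrable (w x y : ℝ) (hw : 0 < w) (hw1 : w < 1) :
    Integrable (mehlerLim w x y) := by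
  refine (dom_integrable w hw hw1).mono' ?_ (Filter.Eventually.of_forall fun p => ?_)
  · apply Continuous.aestronglyMeasurable
    unfold mehlerLim
    fun_prop
  · unfold mehlerLim
    rw [norm_mul, norm_mul, norm_gauss, norm_gauss, ← Real.exp_add]
    gcongr
    rw [Complex.norm_exp, Real.exp_le_exp]
    have : (-(2 * w * π ^ 2 * (p.1 * p.2)) : ℂ)
      = ((-(2 * w * π ^ 2 * (p.1 * p.2)) : ℝ) : ℂ) := by push_cast; ring
    rw [this, Complex.ofReal_re, ← mul_neg]
    gcongr
    exact neg_le_abs _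

lemma mehlerLim_integral (w x y : ℝ) (hw : 0 < w) (hw1 : w < 1) :
    ∫ p, mehlerLim w x y p =
      (((π * √(1 - w ^ 2))⁻¹ * Real.exp (-y ^ 2 - (x - w * y) ^ 2 / (1 - w ^ 2)) : ℝ) : ℂ) := by
  have hpi : (π : ℂ) ≠ 0 := by exact_mod_cast Real.pi_ne_zero
  have hw2 : 0 < 1 - w ^ 2 := by nlinarith
  have hw2c : (1 - w ^ 2 : ℂ) ≠ 0 := by exact_mod_cast hw2.ne'
  have hspi : √π ≠ 0 := (Real.sqrt_pos.mpr Real.pi_pos).ne'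
  rw [Measure.volume_eq_prod, integral_prod _ (mehlerLim_integrable w x y hw hw1)]
  have hin : ∀ t : ℝ, ∫ s : ℝ, mehlerLim w x y (t, s) = ((√(π / π ^ 2) : ℝ) : ℂ) *
      Complex.exp (((-((1 - w ^ 2) * π ^ 2) : ℝ) : ℂ) * t ^ 2
        + (-2 * π * Complex.I * (x - w * y)) * t + -y ^ 2) := by
    intro t
    have h := integral_cexp_quadratic (b := ((-π ^ 2 : ℝ) : ℂ))
      (by rw [Complex.ofReal_re]; have := Real.pi_pos; nlinarith)
      (-2 * w * π ^ 2 * t - 2 * π * Complex.I * y)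
      (-π ^ 2 * t ^ 2 - 2 * π * Complex.I * t * x)
    rw [← Complex.ofReal_neg, neg_neg, ← Complex.ofReal_div,
      cpow_half_ofReal _ (by positivity)] at h
    convert h using 1
    · congr 1
      funext s
      unfold mehlerLim
      rw [← Complex.exp_add, ← Complex.exp_add]
      congr 1
      push_cast; ring
    · congr 2
      push_cast
      field_simp
      ring_nf
      simp only [Complex.I_sq]
      ring
  simp only [hin]
  have h := integral_cexp_quadratic (b := ((-((1 - w ^ 2) * π ^ 2) : ℝ) : ℂ))
      (by rw [Complex.ofReal_re]; have := mul_pos hw2 (pow_pos Real.pi_pos 2); linarith)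
      (-2 * π * Complex.I * (x - w * y)) (-y ^ 2)
  rw [← Complex.ofReal_neg, neg_neg, ← Complex.ofReal_div,
      cpow_half_ofReal _ (by positivity)] at h
  rw [integral_const_mul, h, ← mul_assoc, ← Complex.ofReal_mul, Complex.ofReal_mul _ (Real.exp _)]
  congr 1
  · congr 1
    have e1 : π / π ^ 2 = π⁻¹ := by field_simp
    have e2 : π / ((1 - w ^ 2) * π ^ 2) = π⁻¹ * (1 - w ^ 2)⁻¹ := by field_simp
    rw [e1, e2, Real.sqrt_mul (by positivity), ← mul_assoc,
      Real.mul_self_sqrt (by positivity), Real.sqrt_inv, mul_inv]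
  · rw [Complex.ofReal_exp]
    congr 1
    push_cast
    field_simp
    ring_nf
    simp only [Complex.I_sq]
    ring

lemma mehler_term_integral (w x y : ℝ) (n : ℕ) :
    (((w / 2) ^ n / n.factorial * (hermiteH n x * hermiteH n y) : ℝ) : ℂ)
      = ((Real.exp (x ^ 2 + y ^ 2) * π : ℝ) : ℂ) * ∫ p, mehlerTerm w x y n p := by
  unfold mehlerTerm
  rw [integral_const_mul, Measure.volume_eq_prod, integral_prod_mul
    (fun t : ℝ => ((2 * π * Complex.I * t) ^ n *
        Complex.exp (-π ^ 2 * t ^ 2 - 2 * π * Complex.I * t * x)))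
    (fun t : ℝ => ((2 * π * Complex.I * t) ^ n *
        Complex.exp (-π ^ 2 * t ^ 2 - 2 * π * Complex.I * t * y)))]
  have hp : ((π : ℝ) : ℂ) = (√π : ℝ) * (√π : ℝ) := by
    rw [← Complex.ofReal_mul, Real.mul_self_sqrt Real.pi_pos.le]
  rw [Real.exp_add]
  simp only [Complex.ofReal_mul]
  rw [hermite_integral, hermite_integral]
  generalize (∫ t : ℝ, (2 * π * Complex.I * t) ^ n *
        Complex.exp (-π ^ 2 * t ^ 2 - 2 * π * Complex.I * t * x)) = A
  generalize (∫ t : ℝ, (2 * π * Complex.I * t) ^ n *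
        Complex.exp (-π ^ 2 * t ^ 2 - 2 * π * Complex.I * t * y)) = B
  rw [hp]
  push_cast
  ring

/-- Mehler's formula. -/
lemma mehler (w x y : ℝ) (hw : 0 < w) (hw1 : w < 1) :
    HasSum (fun n : ℕ => (w / 2) ^ n / n.factorial * (hermiteH n x * hermiteH n y))
      ((√(1 - w ^ 2))⁻¹ *
        Real.exp ((2 * w * x * y - w ^ 2 * (x ^ 2 + y ^ 2)) / (1 - w ^ 2))) := by
  have h := (mehler_hasSum_int w x y hw hw1).mul_left ((Real.exp (x ^ 2 + y ^ 2) * π : ℝ) : ℂ)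
  simp only [← mehler_term_integral, mehlerLim_integral w x y hw hw1] at h
  rw [← Complex.ofReal_mul, Complex.hasSum_ofReal] at h
  convert h using 1
  have hw2 : 1 - w ^ 2 ≠ 0 := by nlinarith
  have : Real.exp ((2 * w * x * y - w ^ 2 * (x ^ 2 + y ^ 2)) / (1 - w ^ 2))
    = Real.exp (x ^ 2 + y ^ 2) * Real.exp (-y ^ 2 - (x - w * y) ^ 2 / (1 - w ^ 2)) := by
    rw [← Real.exp_add]
    congr 1
    field_simp
    ring
  rw [this, mul_inv]
  have := Real.pi_ne_zero
  field_simp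

/-- Mehler-type expansion of the normal kernel: for `h > 0`, `0 < w < 1`,
with `a = √((1−w²)/(2h²w))` and `b = √((1−w)/h²)`,
`K_{h²}(x,y) = (1/(√(2π)h)) Σ_n [wⁿ(1−w²)^{1/2}/(2ⁿ n!)] H_n(x;a,b) H_n(y;a,b)`,
the series converging absolutely. -/
theorem normal_kernel_mehler_expansion (h w : ℝ) (hh : 0 < h) (hw0 : 0 < w) (hw1 : w < 1)
    (x y : ℝ) :
    (Summable fun n : ℕ =>
        |w ^ n * Real.sqrt (1 - w ^ 2) / (2 ^ n * n.factorial) *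
          (hermiteScaled n (Real.sqrt ((1 - w ^ 2) / (2 * h ^ 2 * w)))
              (Real.sqrt ((1 - w) / h ^ 2)) x *
            hermiteScaled n (Real.sqrt ((1 - w ^ 2) / (2 * h ^ 2 * w)))
              (Real.sqrt ((1 - w) / h ^ 2)) y)|) ∧
    (Real.sqrt (2 * Real.pi * h ^ 2))⁻¹ * Real.exp (-(x - y) ^ 2 / (2 * h ^ 2))
      = (1 / (Real.sqrt (2 * Real.pi) * h)) *
          ∑' n : ℕ,
            w ^ n * Real.sqrt (1 - w ^ 2) / (2 ^ n * n.factorial) *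
              (hermiteScaled n (Real.sqrt ((1 - w ^ 2) / (2 * h ^ 2 * w)))
                  (Real.sqrt ((1 - w) / h ^ 2)) x *
                hermiteScaled n (Real.sqrt ((1 - w ^ 2) / (2 * h ^ 2 * w)))
                  (Real.sqrt ((1 - w) / h ^ 2)) y) := by
  have hw2 : 0 < 1 - w ^ 2 := by nlinarith
  have hs : √(1 - w ^ 2) ≠ 0 := (Real.sqrt_pos.mpr hw2).ne'
  set a := Real.sqrt ((1 - w ^ 2) / (2 * h ^ 2 * w)) with ha
  set b := Real.sqrt ((1 - w) / h ^ 2) with hb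
  have ha2 : a ^ 2 = (1 - w ^ 2) / (2 * h ^ 2 * w) := Real.sq_sqrt (by positivity)
  have hb2 : b ^ 2 = (1 - w) / h ^ 2 :=
    Real.sq_sqrt (div_nonneg (by linarith) (by positivity))
  have hm := (mehler w (a * x) (a * y) hw0 hw1).mul_left
    (√(1 - w ^ 2) * (Real.exp (-b ^ 2 * x ^ 2 / 2) * Real.exp (-b ^ 2 * y ^ 2 / 2)))
  have hval : √(1 - w ^ 2) * (Real.exp (-b ^ 2 * x ^ 2 / 2) * Real.exp (-b ^ 2 * y ^ 2 / 2)) *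
      ((√(1 - w ^ 2))⁻¹ * Real.exp ((2 * w * (a * x) * (a * y)
        - w ^ 2 * ((a * x) ^ 2 + (a * y) ^ 2)) / (1 - w ^ 2)))
      = Real.exp (-(x - y) ^ 2 / (2 * h ^ 2)) := by
    have : ∀ s E F : ℝ, s ≠ 0 → s * E * (s⁻¹ * F) = E * F := by
      intro s E F hs; field_simp
    rw [this _ _ _ hs, ← Real.exp_add, ← Real.exp_add]
    congr 1
    have e : (2 * w * (a * x) * (a * y) - w ^ 2 * ((a * x) ^ 2 + (a * y) ^ 2))
      = a ^ 2 * (2 * w * x * y - w ^ 2 * (x ^ 2 + y ^ 2)) := by ring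
    rw [e, hb2, ha2]
    have := hw2.ne'
    field_simp
    ring
  rw [hval] at hm
  have hm2 : HasSum (fun n : ℕ => w ^ n * Real.sqrt (1 - w ^ 2) / (2 ^ n * n.factorial) *
      (hermiteScaled n a b x * hermiteScaled n a b y))
      (Real.exp (-(x - y) ^ 2 / (2 * h ^ 2))) := by
    refine hasSum_of_eq hm fun n => ?_
    unfold hermiteScaled
    rw [div_pow]
    field_simp
  refine ⟨hm2.summable.abs, ?_⟩
  rw [hm2.tsum_eq, Real.sqrt_mul (by positivity), Real.sqrt_sq hh.le, one_div]
end

section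
/- Let h > 0, σ > 0, r = h²/σ², and w* = w*(r) = 1 − (1/2)[√(4r + r²) − r]. Set a = √((1 − w*²)/(2h²w*)), b = √((1 − w*)/h²), and γ*_n(x) = H_n(ax) e^{−b²x²/2} · √(aσ/(2^{n−1/2} n!)). Then the functions γ*_0, γ*_1, … are orthonormal in L²(N(0,σ²)) and, with β = w* and α = (1 − w*²)^{1/2}/(2√π h a σ), one has for all x, y ∈ ℝ: K_{h²}(x,y) = Σ_{n=0}^∞ α β^n γ*_n(x) γ*_n(y), the series converging absolutely; that is, (α β^n, γ*_n) is a spectral decomposition of the normal kernel K_{h²} under the baseline measure N(0,σ²), with geometrically declining eigenvalues. -/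
open Real

/-- `w*(r) = 1 − (1/2)[√(4r + r²) − r]`. -/
noncomputable def wstar (r : ℝ) : ℝ :=
  1 - (1 / 2) * (Real.sqrt (4 * r + r ^ 2) - r)

open MeasureTheory in
theorem nk_aux_integrable_real (p : Polynomial ℝ) :
    Integrable (fun x : ℝ => p.eval x * Real.exp (-x ^ 2)) := by
  induction p using Polynomial.induction_on' with
  | add p q hp hq =>
    simp only [Polynomial.eval_add, add_mul]
    exact hp.add hq
  | monomial n c =>
    have := (integrable_rpow_mul_exp_neg_mul_sq (b := 1) one_pos (s := (n : ℝ))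
      (by have : (0:ℝ) ≤ n := n.cast_nonneg
          linarith)).const_mul c
    refine this.congr (Filter.Eventually.of_forall fun x => ?_)
    simp [Polynomial.eval_monomial, mul_assoc]

open MeasureTheory in
theorem nk_aux_integrable_complex (p : Polynomial ℂ) :
    Integrable (fun x : ℝ => p.eval (x : ℂ) * (Real.exp (-x ^ 2) : ℂ)) := by
  induction p using Polynomial.induction_on' with
  | add p q hp hq =>
    simp only [Polynomial.eval_add, add_mul]
    exact hp.add hq
  | monomial n c =>
    have := ((nk_aux_integrable_real (Polynomial.X ^ n)).ofReal (𝕜 := ℂ)).const_mul c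
    refine this.congr (Filter.Eventually.of_forall fun x => ?_)
    simp [Polynomial.eval_monomial, mul_assoc]

/-- Hermite polynomials as polynomials. -/
noncomputable def nkP : ℕ → Polynomial ℝ
  | 0 => 1
  | n + 1 => 2 * Polynomial.X * nkP n - Polynomial.derivative (nkP n)

theorem nk_gauss_deriv (x : ℝ) :
    HasDerivAt (fun t : ℝ => Real.exp (-t ^ 2)) (-(2 * x) * Real.exp (-x ^ 2)) x := by
  have h := ((hasDerivAt_pow 2 x).neg).exp
  refine h.congr_deriv ?_
  simp
  ring

theorem nk_iter (n : ℕ) :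
    iteratedDeriv n (fun t : ℝ => Real.exp (-t ^ 2)) =
      fun x => (-1) ^ n * ((nkP n).eval x * Real.exp (-x ^ 2)) := by
  induction n with
  | zero => ext x; simp [nkP]
  | succ n ih =>
    rw [iteratedDeriv_succ, ih]
    ext x
    have h := ((((nkP n).hasDerivAt x).mul (nk_gauss_deriv x)).const_mul ((-1 : ℝ) ^ n))
    refine h.deriv.trans ?_
    simp [nkP]
    ring

theorem nk_hermite (n : ℕ) (x : ℝ) : hermiteH n x = (nkP n).eval x := by
  unfold hermiteH
  rw [nk_iter]
  have h1 : Real.exp (x ^ 2) * Real.exp (-x ^ 2) = 1 := by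
    rw [← Real.exp_add]; simp
  have h2 : ((-1 : ℝ) ^ n) * (-1) ^ n = 1 := by
    rw [← mul_pow]; simp
  calc _ = ((-1 : ℝ) ^ n * (-1) ^ n) * (Real.exp (x ^ 2) * Real.exp (-x ^ 2)) * (nkP n).eval x := by
        ring
    _ = _ := by rw [h1, h2]; ring

theorem nk_derivP (n : ℕ) :
    Polynomial.derivative (nkP (n + 1)) = (2 * ((n : Polynomial ℝ) + 1)) * nkP n := by
  induction n with
  | zero => simp [nkP]
  | succ n ih =>
    rw [nkP, Polynomial.derivative_sub, Polynomial.derivative_mul, ih]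
    have : nkP (n + 1) = 2 * Polynomial.X * nkP n - Polynomial.derivative (nkP n) := rfl
    rw [this]
    have h2 : Polynomial.derivative (2 : Polynomial ℝ) = 0 := Polynomial.derivative_ofNat 2
    have hn : Polynomial.derivative ((n : Polynomial ℝ)) = 0 := Polynomial.derivative_natCast
    simp [Polynomial.derivative_mul, h2, hn]
    ring

open MeasureTheory in
theorem nk_step (p : Polynomial ℝ) (n : ℕ) :
    ∫ x : ℝ, p.eval x * (nkP (n + 1)).eval x * Real.exp (-x ^ 2) =
      ∫ x : ℝ, (Polynomial.derivative p).eval x * (nkP n).eval x * Real.exp (-x ^ 2) := by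
  have hi1 := nk_aux_integrable_real (p * nkP (n + 1))
  have hi2 := nk_aux_integrable_real (Polynomial.derivative p * nkP n)
  have hi3 := nk_aux_integrable_real (p * nkP n)
  simp only [Polynomial.eval_mul] at hi1 hi2 hi3
  have h := integral_eq_zero_of_hasDerivAt_of_integrable
    (f := fun x => p.eval x * (nkP n).eval x * Real.exp (-x ^ 2))
    (f' := fun x => (Polynomial.derivative p).eval x * (nkP n).eval x * Real.exp (-x ^ 2)
      - p.eval x * (nkP (n + 1)).eval x * Real.exp (-x ^ 2))
    (fun x => by
      refine (((p.hasDerivAt x).mul ((nkP n).hasDerivAt x)).mul (nk_gauss_deriv x)).congr_deriv ?_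
      simp [nkP]
      ring) (hi2.sub hi1) hi3
  rw [integral_sub hi2 hi1] at h
  linarith

theorem nk_orth (m : ℕ) : ∀ n : ℕ,
    ∫ x : ℝ, (nkP m).eval x * (nkP n).eval x * Real.exp (-x ^ 2) =
      if m = n then √π * (2 ^ n * n.factorial) else 0 := by
  induction m with
  | zero =>
    intro n
    cases n with
    | zero =>
      have := integral_gaussian 1
      simpa [nkP] using this
    | succ n =>
      rw [nk_step]
      simp [nkP]
  | succ m ih =>
    intro n
    cases n with
    | zero =>
      have := nk_step (nkP 0) m
      simp only [mul_comm ((nkP 0).eval _)] at this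
      rw [this]
      simp [nkP]
    | succ n =>
      rw [nk_step, nk_derivP]
      have : ∀ x : ℝ, (2 * ((m : Polynomial ℝ) + 1) * nkP m).eval x * (nkP n).eval x *
          Real.exp (-x ^ 2) = (2 * ((m : ℝ) + 1)) *
            ((nkP m).eval x * (nkP n).eval x * Real.exp (-x ^ 2)) := by
        intro x
        simp
        ring
      simp only [this]
      rw [MeasureTheory.integral_const_mul, ih]
      by_cases hmn : m = n
      · subst hmn
        simp [Nat.factorial_succ, pow_succ]
        ring
      · simp [hmn]

/-- the integrand of the integral representation -/
noncomputable def nkJ (n : ℕ) (x t : ℝ) : ℂ :=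
  (2 * ((x : ℂ) + Complex.I * t)) ^ n * (Real.exp (-t ^ 2) : ℂ)

open MeasureTheory in
theorem nkJ_integrable (n : ℕ) (x : ℝ) : Integrable (nkJ n x) := by
  have := nk_aux_integrable_complex
    ((2 * (Polynomial.C (x : ℂ) + Polynomial.C Complex.I * Polynomial.X)) ^ n)
  refine this.congr (Filter.Eventually.of_forall fun t => ?_)
  simp [nkJ]

open MeasureTheory in
theorem nkJ_rec (n : ℕ) (x : ℝ) :
    ∫ t, nkJ (n + 2) x t = 2 * (x : ℂ) * (∫ t, nkJ (n + 1) x t)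
      - 2 * ((n : ℂ) + 1) * ∫ t, nkJ n x t := by
  have hd : ∀ t : ℝ, HasDerivAt (fun t : ℝ => Complex.I * nkJ (n + 1) x t)
      (2 * (x : ℂ) * nkJ (n + 1) x t - 2 * ((n : ℂ) + 1) * nkJ n x t - nkJ (n + 2) x t) t := by
    intro t
    have h1 : HasDerivAt (fun t : ℝ => 2 * ((x : ℂ) + Complex.I * t)) (2 * (Complex.I * 1)) t :=
      (((Complex.ofRealCLM.hasDerivAt (x := t)).const_mul Complex.I).const_add (x : ℂ)).const_mul 2
    have h2 := ((h1.pow (n + 1)).mul (nk_gauss_deriv t).ofReal_comp).const_mul Complex.I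
    refine h2.congr_deriv ?_
    have hI : Complex.I * Complex.I = -1 := Complex.I_mul_I
    simp [nkJ]
    linear_combination (2 * ((n : ℂ) + 1) * (2 * ((x : ℂ) + Complex.I * t)) ^ n
      * Complex.exp (-(t : ℂ) ^ 2)) * hI
  have h := integral_eq_zero_of_hasDerivAt_of_integrable hd
    ((((nkJ_integrable (n + 1) x).const_mul _).sub ((nkJ_integrable n x).const_mul _)).sub
      (nkJ_integrable (n + 2) x)) ((nkJ_integrable (n + 1) x).const_mul _)
  have hA := (nkJ_integrable (n + 1) x).const_mul (2 * (x : ℂ))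
  have hB := (nkJ_integrable n x).const_mul (2 * ((n : ℂ) + 1))
  have hAB : Integrable (fun t => 2 * (x : ℂ) * nkJ (n + 1) x t
    - 2 * ((n : ℂ) + 1) * nkJ n x t) := hA.sub hB
  rw [integral_sub hAB (nkJ_integrable (n + 2) x), integral_sub hA hB,
    integral_const_mul, integral_const_mul] at h
  linear_combination -h

open MeasureTheory in
theorem nkJ_int (x : ℝ) (n : ℕ) :
    ∫ t, nkJ n x t = ((√π * (nkP n).eval x : ℝ) : ℂ) := by
  have hg : ∫ t : ℝ, Real.exp (-t ^ 2) = √π := by simpa using integral_gaussian 1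
  have h0 : ∫ t, nkJ 0 x t = ((√π * (nkP 0).eval x : ℝ) : ℂ) := by
    have : nkJ 0 x = fun t => ((Real.exp (-t ^ 2) : ℝ) : ℂ) := by ext t; simp [nkJ]
    rw [this, integral_complex_ofReal, hg]
    simp [nkP]
  have h1 : ∫ t, nkJ 1 x t = ((√π * (nkP 1).eval x : ℝ) : ℂ) := by
    have hodd : ∫ t : ℝ, t * Real.exp (-t ^ 2) = 0 := by
      have := nk_orth 0 1
      simp [nkP] at this
      simpa [mul_assoc, integral_const_mul] using this
    have : nkJ 1 x = fun t => 2 * (x : ℂ) * ((Real.exp (-t ^ 2) : ℝ) : ℂ)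
        + 2 * Complex.I * ((t * Real.exp (-t ^ 2) : ℝ) : ℂ) := by
      ext t; simp [nkJ]; ring
    have i0 := nk_aux_integrable_real 1
    have i1 := nk_aux_integrable_real Polynomial.X
    simp only [Polynomial.eval_one, one_mul, Polynomial.eval_X] at i0 i1
    rw [this, integral_add (i0.ofReal.const_mul _) (i1.ofReal.const_mul _), integral_const_mul,
      integral_const_mul, integral_complex_ofReal, integral_complex_ofReal, hodd, hg]
    simp [nkP]
    ring
  induction n using Nat.twoStepInduction with
  | zero => exact h0
  | one => exact h1
  | more n ih1 ih2 =>
    rw [nkJ_rec, ih1, ih2]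
    have : nkP (n + 2) = 2 * Polynomial.X * nkP (n + 1)
      - (2 * ((n : Polynomial ℝ) + 1)) * nkP n := by rw [← nk_derivP]; rfl
    rw [this]
    simp
    ring

theorem nk_norm_bound (w x y s t : ℝ) (hw : 0 < w) :
    Real.exp (2 * w * ‖(x : ℂ) + Complex.I * s‖ * ‖(y : ℂ) + Complex.I * t‖)
      * (Real.exp (-s ^ 2) * Real.exp (-t ^ 2)) ≤
    Real.exp (w * (x ^ 2 + y ^ 2)) * (Real.exp (-(1 - w) * s ^ 2) * Real.exp (-(1 - w) * t ^ 2)) := by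
  have e : ∀ x s : ℝ, ‖(x : ℂ) + Complex.I * s‖ ^ 2 = x ^ 2 + s ^ 2 := by
    intro x s
    rw [← Complex.normSq_eq_norm_sq, Complex.normSq_apply]
    simp
    ring
  have e1 := e x s
  have e2 := e y t
  simp only [← Real.exp_add]
  apply Real.exp_le_exp.mpr
  nlinarith [mul_nonneg hw.le
    (sq_nonneg (‖(x : ℂ) + Complex.I * s‖ - ‖(y : ℂ) + Complex.I * t‖))]

/-- the double integrand -/
noncomputable def nkG (w x y : ℝ) (p : ℝ × ℝ) : ℂ :=
  Complex.exp (2 * w * ((x : ℂ) + Complex.I * p.1) * ((y : ℂ) + Complex.I * p.2))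
      * ((Real.exp (-p.1 ^ 2) : ℂ) * (Real.exp (-p.2 ^ 2) : ℂ))

open MeasureTheory in
theorem nk_bound_integrable (w x y : ℝ) (hw : 0 < w) (hw1 : w < 1) :
    Integrable (fun p : ℝ × ℝ =>
      Real.exp (2 * w * ‖(x : ℂ) + Complex.I * p.1‖ * ‖(y : ℂ) + Complex.I * p.2‖)
      * (Real.exp (-p.1 ^ 2) * Real.exp (-p.2 ^ 2))) (volume.prod volume) := by
  have hi : Integrable (fun s : ℝ => Real.exp (-(1 - w) * s ^ 2)) :=
    integrable_exp_neg_mul_sq (by linarith)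
  refine ((hi.mul_prod hi).const_mul (Real.exp (w * (x ^ 2 + y ^ 2)))).mono' ?_ ?_
  · exact Continuous.aestronglyMeasurable (by fun_prop)
  · refine Filter.Eventually.of_forall fun p => ?_
    rw [Real.norm_of_nonneg (by positivity)]
    exact nk_norm_bound w x y p.1 p.2 hw

open MeasureTheory in
theorem nkG_integrable (w x y : ℝ) (hw : 0 < w) (hw1 : w < 1) :
    Integrable (nkG w x y) (volume.prod volume) := by
  refine (nk_bound_integrable w x y hw hw1).mono' ?_ ?_
  · refine Continuous.aestronglyMeasurable ?_
    unfold nkG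
    fun_prop
  · refine Filter.Eventually.of_forall fun p => ?_
    unfold nkG
    rw [norm_mul, norm_mul, Complex.norm_real, Complex.norm_real,
      Real.norm_of_nonneg (Real.exp_pos _).le, Real.norm_of_nonneg (Real.exp_pos _).le]
    gcongr
    refine (Complex.norm_exp_le_exp_norm _).trans ?_
    simp [abs_of_pos hw]

theorem nk_cpow (u : ℝ) (hu : 0 < u) : ((π : ℂ) / u) ^ (1 / 2 : ℂ) = ((√π / √u : ℝ) : ℂ) := by
  rw [← Complex.ofReal_div, ← Real.sqrt_div' _ hu.le, Real.sqrt_eq_rpow,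
    Complex.ofReal_cpow (by positivity)]
  simp

open MeasureTheory in
theorem nkG_integral (w x y : ℝ) (hw : 0 < w) (hw1 : w < 1) :
    ∫ p, nkG w x y p ∂(volume.prod volume) =
      ((π / √(1 - w ^ 2) * Real.exp ((2 * w * x * y - w ^ 2 * (x ^ 2 + y ^ 2)) / (1 - w ^ 2)) : ℝ)
        : ℂ) := by
  have hu : 0 < 1 - w ^ 2 := by nlinarith
  rw [integral_prod _ (nkG_integrable w x y hw hw1)]
  have hin : ∀ s : ℝ, ∫ t : ℝ, nkG w x y (s, t) =
      (√π : ℂ) * Complex.exp ((-((1 - w ^ 2 : ℝ) : ℂ)) * (s : ℂ) ^ 2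
        + (2 * Complex.I * w * (y - w * x)) * s + (2 * w * x * y - w ^ 2 * x ^ 2)) := by
    intro s
    have h := integral_cexp_quadratic (b := -1) (by simp)
      (2 * w * Complex.I * ((x : ℂ) + Complex.I * s))
      (2 * w * y * ((x : ℂ) + Complex.I * s) - (s : ℂ) ^ 2)
    have hc := nk_cpow 1 one_pos
    simp only [neg_neg] at h
    simp only [Complex.ofReal_one, Real.sqrt_one, div_one] at hc
    rw [div_one, hc] at h
    refine Eq.trans ?_ (h.trans ?_)
    · congr 1
      ext t
      simp only [nkG, Complex.ofReal_exp, ← Complex.exp_add]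
      congr 1
      push_cast
      ring
    · congr 2
      push_cast
      linear_combination ((w : ℂ) ^ 2 * x ^ 2 + (w : ℂ) ^ 2 * s ^ 2 * (Complex.I ^ 2 - 1)
        + 2 * w ^ 2 * x * s * Complex.I) * Complex.I_sq
  simp only [hin]
  rw [integral_const_mul]
  rw [integral_cexp_quadratic (by rw [Complex.neg_re, Complex.ofReal_re]; linarith), neg_neg,
    nk_cpow _ hu]
  have hu' : (1 - (w : ℂ) ^ 2) ≠ 0 := by
    have : ((1 - w ^ 2 : ℝ) : ℂ) ≠ 0 := Complex.ofReal_ne_zero.mpr hu.ne'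
    simpa using this
  rw [Complex.ofReal_mul, Complex.ofReal_exp, ← mul_assoc, ← Complex.ofReal_mul]
  rw [← mul_div_assoc, Real.mul_self_sqrt Real.pi_pos.le]
  congr 2
  · push_cast
    field_simp
    ring_nf
    simp only [Complex.I_sq]
    ring

open MeasureTheory in
theorem nk_mehler (w x y : ℝ) (hw : 0 < w) (hw1 : w < 1) :
    HasSum (fun n : ℕ => (w / 2) ^ n / n.factorial * ((nkP n).eval x * (nkP n).eval y))
      (1 / √(1 - w ^ 2) *
        Real.exp ((2 * w * x * y - w ^ 2 * (x ^ 2 + y ^ 2)) / (1 - w ^ 2))) := by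
  have key := hasSum_integral_of_dominated_convergence (μ := (volume : Measure ℝ).prod volume)
    (F := fun (n : ℕ) (p : ℝ × ℝ) =>
      (((w / 2) ^ n / n.factorial : ℝ) : ℂ) * (nkJ n x p.1 * nkJ n y p.2))
    (f := nkG w x y)
    (fun (n : ℕ) (p : ℝ × ℝ) =>
      (2 * w * ‖(x : ℂ) + Complex.I * p.1‖ * ‖(y : ℂ) + Complex.I * p.2‖) ^ n / n.factorial
      * (Real.exp (-p.1 ^ 2) * Real.exp (-p.2 ^ 2)))
    (fun n => by
      refine Continuous.aestronglyMeasurable ?_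
      unfold nkJ
      fun_prop)
    (fun n => by
      refine Filter.Eventually.of_forall fun p => le_of_eq ?_
      simp only [nkJ, norm_mul, norm_pow, Complex.norm_real, 
        Real.norm_of_nonneg (Real.exp_pos _).le]
      rw [Real.norm_of_nonneg (by positivity), Complex.norm_ofNat]
      have : (2 * w * ‖(x : ℂ) + Complex.I * p.1‖ * ‖(y : ℂ) + Complex.I * p.2‖) =
        (w / 2) * (2 * ‖(x : ℂ) + Complex.I * p.1‖) * (2 * ‖(y : ℂ) + Complex.I * p.2‖) := by ring
      rw [this, mul_pow _ (2 * ‖(y : ℂ) + Complex.I * p.2‖), mul_pow (w / 2)]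
      ring)
    (Filter.Eventually.of_forall fun p =>
      (Real.summable_pow_div_factorial _).mul_right _)
    (by
      refine (nk_bound_integrable w x y hw hw1).congr (Filter.Eventually.of_forall fun p => ?_)
      simp only [tsum_mul_right]
      rw [Real.exp_eq_exp_ℝ, NormedSpace.exp_eq_tsum_div])
    (Filter.Eventually.of_forall fun p => by
      have h := NormedSpace.expSeries_div_hasSum_exp
        (2 * w * ((x : ℂ) + Complex.I * p.1) * ((y : ℂ) + Complex.I * p.2))
      rw [← Complex.exp_eq_exp_ℂ] at h
      have h' := h.mul_right ((Real.exp (-p.1 ^ 2) : ℂ) * (Real.exp (-p.2 ^ 2) : ℂ))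
      refine h'.congr_fun ?_
      intro n
      have : (2 * w * ((x : ℂ) + Complex.I * p.1) * ((y : ℂ) + Complex.I * p.2)) =
        ((w : ℂ) / 2) * (2 * ((x : ℂ) + Complex.I * p.1)) * (2 * ((y : ℂ) + Complex.I * p.2)) := by
        ring
      rw [this, mul_pow, mul_pow ((w : ℂ) / 2)]
      simp only [nkJ]
      push_cast
      ring)
  rw [nkG_integral w x y hw hw1] at key
  have hterm : ∀ n : ℕ, ∫ p : ℝ × ℝ, (((w / 2) ^ n / n.factorial : ℝ) : ℂ) *
      (nkJ n x p.1 * nkJ n y p.2) ∂((volume : Measure ℝ).prod volume) =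
      ((π * ((w / 2) ^ n / n.factorial * ((nkP n).eval x * (nkP n).eval y)) : ℝ) : ℂ) := by
    intro n
    rw [integral_const_mul, integral_prod_mul, nkJ_int, nkJ_int, ← Complex.ofReal_mul,
      ← Complex.ofReal_mul]
    congr 1
    have := Real.mul_self_sqrt Real.pi_pos.le
    linear_combination ((w / 2) ^ n / n.factorial * ((nkP n).eval x * (nkP n).eval y)) * this
  simp only [hterm] at key
  have key2 := (Complex.hasSum_ofReal.mp key).mul_left (π⁻¹)
  have hpi : π ≠ 0 := Real.pi_ne_zero
  have hval : ∀ u v : ℝ, π⁻¹ * (π / u * v) = 1 / u * v := by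
    intro u v
    rw [← mul_assoc, div_eq_mul_inv π, inv_mul_cancel_left₀ hpi, one_div]
  simp only [inv_mul_cancel_left₀ hpi, hval] at key2
  exact key2

theorem nk_wstar (r : ℝ) (hr : 0 < r) :
    0 < wstar r ∧ wstar r < 1 ∧ (1 - wstar r) ^ 2 = r * wstar r := by
  unfold wstar
  have hs := Real.sq_sqrt (show 0 ≤ 4 * r + r ^ 2 by positivity)
  have hs0 := Real.sqrt_nonneg (4 * r + r ^ 2)
  set s := √(4 * r + r ^ 2)
  refine ⟨?_, ?_, ?_⟩
  · have : s < r + 2 := by nlinarith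
    linarith
  · have : r < s := by nlinarith
    linarith
  · linear_combination (1 / 4) * hs

theorem nk_c (q : ℝ) (hq : 0 < q) (n : ℕ) :
    √(q / ((2 : ℝ) ^ ((n : ℝ) - 1 / 2) * n.factorial)) *
      √(q / ((2 : ℝ) ^ ((n : ℝ) - 1 / 2) * n.factorial)) =
      q * √2 / (2 ^ n * n.factorial) := by
  rw [Real.mul_self_sqrt (by positivity), Real.rpow_sub two_pos, Real.rpow_natCast,
    ← Real.sqrt_eq_rpow]
  have : √2 ≠ 0 := by positivity
  field_simp

/-- spectral decomposition of the normal kernel `K_{h²}` under baseline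
measure `N(0,σ²)`.  With `r = h²/σ²`, `w* = w*(r)`, `a = √((1−w*²)/(2h²w*))`,
`b = √((1−w*)/h²)`, `γ*_n(x) = H_n(ax) e^{−b²x²/2} √(aσ/(2^{n−1/2} n!))`,
`β = w*` and `α = (1−w*²)^{1/2}/(2√π h a σ)`, the `γ*_n` are orthonormal in
`L²(N(0,σ²))` and `K_{h²}(x,y) = Σ_n α βⁿ γ*_n(x) γ*_n(y)`, converging absolutely. -/
theorem normal_kernel_spectral_decomposition (h σ : ℝ) (hh : 0 < h) (hσ : 0 < σ) :
    let w := wstar (h ^ 2 / σ ^ 2)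
    let a := Real.sqrt ((1 - w ^ 2) / (2 * h ^ 2 * w))
    let b := Real.sqrt ((1 - w) / h ^ 2)
    let γ : ℕ → ℝ → ℝ := fun n x =>
      hermiteH n (a * x) * Real.exp (-b ^ 2 * x ^ 2 / 2) *
        Real.sqrt (a * σ / ((2 : ℝ) ^ ((n : ℝ) - 1 / 2) * n.factorial))
    let α := Real.sqrt (1 - w ^ 2) / (2 * Real.sqrt Real.pi * h * a * σ)
    (∀ m n : ℕ,
        (1 / (Real.sqrt (2 * Real.pi) * σ)) *
            ∫ x : ℝ, γ m x * γ n x * Real.exp (-x ^ 2 / (2 * σ ^ 2))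
          = if m = n then 1 else 0) ∧
    ∀ x y : ℝ,
      (Summable fun n : ℕ => |α * w ^ n * (γ n x * γ n y)|) ∧
      (∑' n : ℕ, α * w ^ n * (γ n x * γ n y))
        = (Real.sqrt (2 * Real.pi * h ^ 2))⁻¹ *
            Real.exp (-(x - y) ^ 2 / (2 * h ^ 2)) := by
  intro w a b γ α
  have hr : 0 < h ^ 2 / σ ^ 2 := by positivity
  obtain ⟨hw0, hw1, hweq⟩ := nk_wstar _ hr
  change 0 < w at hw0
  change w < 1 at hw1
  change (1 - w) ^ 2 = h ^ 2 / σ ^ 2 * w at hweq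
  have hu : 0 < 1 - w ^ 2 := by nlinarith
  have ha : 0 < a := Real.sqrt_pos.mpr (by positivity)
  have ha2 : a ^ 2 = (1 - w ^ 2) / (2 * h ^ 2 * w) := Real.sq_sqrt (by positivity)
  have hb2 : b ^ 2 = (1 - w) / h ^ 2 := Real.sq_sqrt (div_nonneg (by linarith) (by positivity))
  have hab : b ^ 2 + 1 / (2 * σ ^ 2) = a ^ 2 := by
    rw [ha2, hb2]
    field_simp at hweq ⊢
    linear_combination -hweq
  clear_value w a b
  constructor
  · intro m n
    have hint : ∀ x : ℝ, γ m x * γ n x * Real.exp (-x ^ 2 / (2 * σ ^ 2)) =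
        (√(a * σ / ((2 : ℝ) ^ ((m : ℝ) - 1 / 2) * m.factorial)) *
          √(a * σ / ((2 : ℝ) ^ ((n : ℝ) - 1 / 2) * n.factorial))) *
        ((nkP m).eval (a * x) * (nkP n).eval (a * x) * Real.exp (-(a * x) ^ 2)) := by
      intro x
      have he : Real.exp (-(a * x) ^ 2) = Real.exp (-b ^ 2 * x ^ 2 / 2) *
          Real.exp (-b ^ 2 * x ^ 2 / 2) * Real.exp (-x ^ 2 / (2 * σ ^ 2)) := by
        rw [← Real.exp_add, ← Real.exp_add]
        congr 1
        rw [mul_pow, ← hab]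
        ring
      simp only [γ, nk_hermite]
      rw [he]
      ring
    simp only [hint]
    rw [MeasureTheory.integral_const_mul, MeasureTheory.Measure.integral_comp_mul_left
      (fun y : ℝ => (nkP m).eval y * (nkP n).eval y * Real.exp (-y ^ 2)) a, nk_orth]
    by_cases hmn : m = n
    · subst hmn
      rw [nk_c _ (by positivity)]
      simp only [if_true, smul_eq_mul]
      rw [abs_of_pos (by positivity), Real.sqrt_mul (by norm_num)]
      have h2 : √2 ≠ 0 := by positivity
      have hp : √π ≠ 0 := by positivity
      field_simp
    · simp [hmn]
  · intro x y
    have hm := (nk_mehler w (a * x) (a * y) hw0 hw1).mul_left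
      (α * (a * σ * √2) * Real.exp (-b ^ 2 * x ^ 2 / 2) * Real.exp (-b ^ 2 * y ^ 2 / 2))
    have hf : (fun n : ℕ => α * (a * σ * √2) * Real.exp (-b ^ 2 * x ^ 2 / 2) *
        Real.exp (-b ^ 2 * y ^ 2 / 2) *
        ((w / 2) ^ n / n.factorial * ((nkP n).eval (a * x) * (nkP n).eval (a * y)))) =
        fun n : ℕ => α * w ^ n * (γ n x * γ n y) := by
      ext n
      have hc := nk_c (a * σ) (by positivity) n
      simp only [γ, nk_hermite]
      rw [div_pow]
      have hf0 : (n.factorial : ℝ) ≠ 0 := by positivity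
      calc _ = α * w ^ n * ((nkP n).eval (a * x) * (nkP n).eval (a * y) *
            Real.exp (-b ^ 2 * x ^ 2 / 2) * Real.exp (-b ^ 2 * y ^ 2 / 2) *
            (a * σ * √2 / (2 ^ n * n.factorial))) := by
            field_simp
        _ = _ := by rw [← hc]; ring
    rw [hf] at hm
    refine ⟨hm.summable.abs, ?_⟩
    rw [hm.tsum_eq]
    have hexp : Real.exp (-(x - y) ^ 2 / (2 * h ^ 2)) =
        Real.exp (-b ^ 2 * x ^ 2 / 2) * Real.exp (-b ^ 2 * y ^ 2 / 2) *
        Real.exp ((2 * w * (a * x) * (a * y) - w ^ 2 * ((a * x) ^ 2 + (a * y) ^ 2))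
          / (1 - w ^ 2)) := by
      rw [← Real.exp_add, ← Real.exp_add]
      congr 1
      have : (2 * w * (a * x) * (a * y) - w ^ 2 * ((a * x) ^ 2 + (a * y) ^ 2)) =
        a ^ 2 * (2 * w * x * y - w ^ 2 * (x ^ 2 + y ^ 2)) := by ring
      rw [this, neg_mul, neg_mul, ha2, hb2]
      have := hu.ne'
      field_simp
      ring
    rw [hexp, Real.sqrt_mul (by positivity), Real.sqrt_mul (by norm_num), Real.sqrt_sq hh.le]
    simp only [α]
    have h2 : √2 ≠ 0 := by positivity
    have hp : √π ≠ 0 := by positivity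
    have hu2 : √(1 - w ^ 2) ≠ 0 := (Real.sqrt_pos.mpr hu).ne'
    have h22 := Real.sq_sqrt (show (0 : ℝ) ≤ 2 by norm_num)
    field_simp
    rw [h22]
end
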